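/- There exists an absolute constant c > 0 such that for all real numbers α ≥ β ≥ 2 and r ≥ s > −1 and all integers n ≥ (2α+r+1)², one has ∫_{−1}^1 |p_n^{(α+r+1, β−1)}(x)/p_n^{(α+r+1, β−1)}(1)|² (1−x)^{s+α} (1+x)^β dx ≤ c · 2^{α+β+s} (α+r+1)^{1/3} Γ(α+r+2)^{(4α+4s+4)/(2α+2r+3)} n^{−2α−2s−2}. -/

import Mathlib

noncomputable section

open MeasureTheory Real Set
open scoped RealInnerProductSpace

/-- Value at `x` of the orthonormalized Jacobi polynomial `p_n^{(α,β)}`. -/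
def jacobiP (α β : ℝ) (n : ℕ) (x : ℝ) : ℝ :=
  Real.sqrt ((2 * (n : ℝ) + α + β + 1) / 2 ^ (α + β + 1) *
      (Real.Gamma ((n : ℝ) + α + β + 1) * (n.factorial : ℝ) /
        (Real.Gamma ((n : ℝ) + α + 1) * Real.Gamma ((n : ℝ) + β + 1)))) *
    (Real.Gamma (α + n + 1) / ((n.factorial : ℝ) * Real.Gamma (α + β + n + 1))) *
    ∑ m ∈ Finset.range (n + 1),
      (n.choose m : ℝ) * (Real.Gamma (α + β + n + m + 1) / Real.Gamma (α + m + 1)) *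
        ((x - 1) / 2) ^ m

/-- The kernel `K_n^{(α,β)}(x) = Σ_{ℓ<n} p_ℓ^{(α,β)}(1) p_ℓ^{(α,β)}(x)`. -/
def jacobiK (α β : ℝ) (n : ℕ) (x : ℝ) : ℝ :=
  ∑ ℓ ∈ Finset.range n, jacobiP α β ℓ 1 * jacobiP α β ℓ x

/-- The unit sphere `S^d ⊂ ℝ^{d+1}`. -/
abbrev Sph (d : ℕ) := Metric.sphere (0 : EuclideanSpace ℝ (Fin (d + 1))) 1

/-- The rotation invariant Riemannian volume probability measure `μ_d^*` on `S^d`. -/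
def sphMeasure (d : ℕ) : Measure (Sph d) :=
  ((volume : Measure (EuclideanSpace ℝ (Fin (d + 1)))).toSphere Set.univ)⁻¹ •
    (volume : Measure (EuclideanSpace ℝ (Fin (d + 1)))).toSphere

/-- `f : S^d → ℝ` is the restriction to the sphere of an algebraic polynomial in `d+1`
variables of total degree `< n`, i.e. `f ∈ Π_n^d`. -/
def IsSphPoly (d : ℕ) (n : ℝ) (f : Sph d → ℝ) : Prop :=
  ∃ p : MvPolynomial (Fin (d + 1)) ℝ, (p.totalDegree : ℝ) < n ∧
    ∀ y : Sph d, f y = MvPolynomial.eval (fun i => (y : EuclideanSpace ℝ (Fin (d + 1))) i) p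

/-- Integral of `f` with respect to a signed measure (via the Jordan decomposition). -/
def sInt {X : Type*} [MeasurableSpace X] (ν : SignedMeasure X) (f : X → ℝ) : ℝ :=
  (∫ x, f x ∂ν.toJordanDecomposition.posPart) - ∫ x, f x ∂ν.toJordanDecomposition.negPart

/-- Integral of `f` over a set `s` with respect to a signed measure. -/
def sIntOn {X : Type*} [MeasurableSpace X] (ν : SignedMeasure X) (s : Set X) (f : X → ℝ) : ℝ :=
  (∫ x in s, f x ∂ν.toJordanDecomposition.posPart) -
    ∫ x in s, f x ∂ν.toJordanDecomposition.negPart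

/-- `ν` is a quadrature measure of order `n` on `S^d`. -/
def IsQuadrature (d : ℕ) (n : ℝ) (ν : SignedMeasure (Sph d)) : Prop :=
  ∀ f : Sph d → ℝ, IsSphPoly d n f → sInt ν f = ∫ y, f y ∂sphMeasure d

/-- `ν` satisfies the Marcinkiewicz-Zygmund inequality of order `n` with constant `c`;
`ν ∈ MZ(d;n)` means this holds for some `c`, and `|||ν|||_{d;n}` is the least such `c`. -/
def IsMZ (d : ℕ) (n : ℝ) (ν : SignedMeasure (Sph d)) (c : ℝ) : Prop :=
  ∀ f : Sph d → ℝ, IsSphPoly d (n / 2) f →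
    (∫ y, (f y) ^ 2 ∂ν.totalVariation) ≤ c * ∫ y, (f y) ^ 2 ∂sphMeasure d

/-- `ω_d`, the volume of `S^d`. -/
def omegaS (d : ℕ) : ℝ := 2 * Real.pi ^ (((d : ℝ) + 1) / 2) / Real.Gamma (((d : ℝ) + 1) / 2)

/-- The reproducing kernel `K_{d;n}` of `Π_n^d`. -/
def sphK (d n : ℕ) (x : ℝ) : ℝ :=
  (omegaS d / omegaS (d - 1)) * jacobiK ((d : ℝ) / 2 - 1) ((d : ℝ) / 2 - 1) n x

/-- The kernel `Φ̃_{d;n,r}`. -/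
def PhiTilde (d n : ℕ) (r : ℝ) (x : ℝ) : ℝ :=
  sphK d ((d + 2) * n) x *
    (jacobiP ((d : ℝ) / 2 + r) ((d : ℝ) / 2 - 2) (d * n) x /
      jacobiP ((d : ℝ) / 2 + r) ((d : ℝ) / 2 - 2) (d * n) 1)

/-- The kernel `Φ_{d;n,r}`. -/
def Phi (d n : ℕ) (r : ℝ) (x : ℝ) : ℝ := PhiTilde d n r x * ((1 + x) / 2) ^ n

/-- The inner product `x·y` of two points of `S^d`. -/
def ip {d : ℕ} (x y : Sph d) : ℝ :=
  ⟪(x : EuclideanSpace ℝ (Fin (d + 1))), (y : EuclideanSpace ℝ (Fin (d + 1)))⟫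

/-- The operator `σ_{d;n,r}(ν, f)`. -/
def sigmaOp (d n : ℕ) (r : ℝ) (ν : SignedMeasure (Sph d)) (f : Sph d → ℝ) (x : Sph d) : ℝ :=
  sInt ν (fun y => f y * Phi d n r (ip x y))

/-- The operator `σ̃_{d;n,r}(ν, f)`. -/
def sigmaTildeOp (d n : ℕ) (r : ℝ) (ν : SignedMeasure (Sph d)) (f : Sph d → ℝ) (x : Sph d) : ℝ :=
  sInt ν (fun y => f y * PhiTilde d n r (ip x y))

/-- The uniform (supremum) norm `‖f‖_∞`. -/
def supNorm {X : Type*} (f : X → ℝ) : ℝ := sSup (Set.range fun x => |f x|)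

/-- `E_{d;n}(f)`, the degree of approximation of `f` from `Π_n^d` in the uniform norm. -/
def bestApprox (d : ℕ) (n : ℝ) (f : Sph d → ℝ) : ℝ :=
  sInf {t | ∃ g, IsSphPoly d n g ∧ ∀ y, |f y - g y| ≤ t}

/-- `dim Π_n^d = (2n+d−2)·Γ(n+d−1)/(Γ(n)·Γ(d+1))` (for `n ≥ 2`). -/
def dimPi (d n : ℕ) : ℝ :=
  (2 * (n : ℝ) + d - 2) * Real.Gamma ((n : ℝ) + d - 1) /
    (Real.Gamma n * Real.Gamma ((d : ℝ) + 1))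

/-!
In the variable `y = (1 - x) / 2` the quotient `p_n^{(a,b)}(x) / p_n^{(a,b)}(1)` is the polynomial
`Q(y) = ₂F₁(-n, n + a + b + 1; a + 1; y)`. Its hypergeometric equation shows that Sonine's function
`n (n + a + b + 1) Q² + y (1 - y) Q'²` decreases up to some point of `[0, 1]` and increases
afterwards, so `Q² ≤ 1` there because `Q(0) = 1` and, by Chu–Vandermonde, `Q(1)² ≤ 1`.

The weight `y^(a-1) (1 - y)^b` is just outside the orthogonality range: by Lagrange interpolation at
`0, …, n`, `Q` is still orthogonal to `y, …, y^n`, and only its constant term `1` contributes to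
`∫ Q² y^(a-1) (1 - y)^b`. This integral is thus a quotient of Gamma values, and log-convexity of `Γ`
bounds it by `e^a` with `e = Γ(a + 1)^(4 / (2 a + 1)) / n²`.

For an exponent `t ≤ a - 1`, split the integral against `y^t` at `y = e`: below `e` use `Q² ≤ 1`,
above it use `y^t ≤ e^(t - a + 1) y^(a-1)`. Both parts are `O(e^(t + 1))`.
-/

section Gamma

open ProbabilityTheory

theorem Gamma_add_natCast_eq_mul_ascPochhammer {x : ℝ} (hx : 0 < x) (k : ℕ) :
    Real.Gamma (x + k) = Real.Gamma x * (ascPochhammer ℝ k).eval x := by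
  induction k with
  | zero => simp
  | succ k ih =>
    rw [Nat.cast_succ, ← add_assoc, Real.Gamma_add_one (by positivity), ih, ascPochhammer_succ_eval]
    ring

theorem Gamma_mul_rpow_le_Gamma_add {x a : ℝ} (hx : 0 < x) (ha : 1 ≤ a) :
    Real.Gamma x * x ^ a ≤ Real.Gamma (x + a) := by
  rcases ha.eq_or_lt with rfl | ha
  · rw [rpow_one, Real.Gamma_add_one hx.ne', mul_comm]
  have hΓ : 0 < Real.Gamma x := Real.Gamma_pos_of_pos hx
  have slope := convexOn_log_Gamma.slope_mono_adjacent (x := x) (y := x + 1) (z := x + a)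
    (mem_Ioi.2 hx) (mem_Ioi.2 (by linarith)) (by linarith) (by linarith)
  rw [Function.comp_apply, Function.comp_apply, Function.comp_apply, Real.Gamma_add_one hx.ne',
    log_mul hx.ne' hΓ.ne', add_sub_cancel_right, add_sub_cancel_left, div_one,
    le_div_iff₀ (by linarith)] at slope
  rw [← log_le_log_iff (by positivity) (Real.Gamma_pos_of_pos (by linarith)),
    log_mul hΓ.ne' (by positivity), log_rpow hx]
  linarith

theorem Gamma_div_Gamma_add_le {m x a : ℝ} (hm : 0 < m) (hmx : m ≤ x) (ha : 1 ≤ a) :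
    Real.Gamma x / Real.Gamma (x + a) ≤ m ^ (-a) := by
  have hx : 0 < x := hm.trans_le hmx
  rw [rpow_neg hm.le, ← one_div, div_le_div_iff₀ (Real.Gamma_pos_of_pos (by linarith))
    (by positivity), one_mul]
  calc Real.Gamma x * m ^ a ≤ Real.Gamma x * x ^ a := by gcongr
    _ ≤ Real.Gamma (x + a) := Gamma_mul_rpow_le_Gamma_add hx ha

theorem Gamma_add_one_le_rpow_self {a : ℝ} (ha : 1 ≤ a) : Real.Gamma (a + 1) ≤ a ^ a := by
  rcases ha.eq_or_lt with rfl | ha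
  · norm_num
  have ha0 : 0 < a := by linarith
  have hΓ : 0 < Real.Gamma a := Real.Gamma_pos_of_pos ha0
  have slope := convexOn_log_Gamma.slope_mono_adjacent (x := 1) (y := a) (z := a + 1)
    (mem_Ioi.2 one_pos) (mem_Ioi.2 (by linarith)) ha (by linarith)
  rw [Function.comp_apply, Function.comp_apply, Function.comp_apply, Real.Gamma_add_one ha0.ne',
    log_mul ha0.ne' hΓ.ne', add_sub_cancel_right, add_sub_cancel_left, div_one, Real.Gamma_one,
    log_one, sub_zero, div_le_iff₀ (by linarith)] at slope
  rw [Real.Gamma_add_one ha0.ne', ← log_le_log_iff (by positivity) (by positivity),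
    log_mul ha0.ne' hΓ.ne', log_rpow ha0]
  linarith

theorem Gamma_add_one_rpow_le_self {a : ℝ} (ha : 1 ≤ a) :
    Real.Gamma (a + 1) ^ (2 / (2 * a + 1)) ≤ a := by
  have ha0 : 0 < a := by linarith
  calc Real.Gamma (a + 1) ^ (2 / (2 * a + 1))
      ≤ (a ^ a) ^ (2 / (2 * a + 1)) := by
        gcongr
        exact Gamma_add_one_le_rpow_self ha
    _ = a ^ (a * (2 / (2 * a + 1))) := (rpow_mul ha0.le _ _).symm
    _ ≤ a ^ (1 : ℝ) := by
        refine rpow_le_rpow_of_exponent_le ha ?_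
        rw [← mul_div_assoc, div_le_one (by linarith)]
        linarith
    _ = a := rpow_one a

theorem Gamma_mul_Gamma_add_one_le {a : ℝ} (ha : 1 ≤ a) :
    Real.Gamma a * Real.Gamma (a + 1) ≤ Real.Gamma (a + 1) ^ (4 * a / (2 * a + 1)) := by
  have ha0 : 0 < a := by linarith
  set G := Real.Gamma (a + 1) with hG
  have hG0 : 0 < G := Real.Gamma_pos_of_pos (by linarith)
  have hsplit : G ^ (4 * a / (2 * a + 1)) * G ^ (2 / (2 * a + 1)) = G * G := by
    rw [← rpow_add hG0, show 4 * a / (2 * a + 1) + 2 / (2 * a + 1) = 2 by field_simp; ring,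
      rpow_two, sq]
  refine le_of_mul_le_mul_right ?_ ha0
  calc Real.Gamma a * G * a = G * G := by rw [hG, Real.Gamma_add_one ha0.ne']; ring
    _ = G ^ (4 * a / (2 * a + 1)) * G ^ (2 / (2 * a + 1)) := hsplit.symm
    _ ≤ G ^ (4 * a / (2 * a + 1)) * a := by gcongr; exact Gamma_add_one_rpow_le_self ha

theorem ofReal_rpow_mul_one_sub_rpow {y : ℝ} (hy : y ∈ Icc 0 1) (u v : ℝ) :
    ((y ^ (u - 1) * (1 - y) ^ (v - 1) : ℝ) : ℂ)
      = (y : ℂ) ^ ((u : ℂ) - 1) * (1 - (y : ℂ)) ^ ((v : ℂ) - 1) := by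
  push_cast [Complex.ofReal_cpow hy.1, Complex.ofReal_cpow (sub_nonneg.2 hy.2)]
  rfl

theorem intervalIntegrable_rpow_mul_one_sub_rpow {u v : ℝ} (hu : 0 < u) (hv : 0 < v) :
    IntervalIntegrable (fun y : ℝ ↦ y ^ (u - 1) * (1 - y) ^ (v - 1)) volume 0 1 := by
  have h := Complex.betaIntegral_convergent (u := u) (v := v) (by simpa) (by simpa)
  rw [intervalIntegrable_iff_integrableOn_Ioc_of_le zero_le_one] at h ⊢
  refine IntegrableOn.congr_fun h.re (fun y hy ↦ ?_) measurableSet_Ioc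
  simp only [← ofReal_rpow_mul_one_sub_rpow (Ioc_subset_Icc_self hy), RCLike.re_to_complex,
    Complex.ofReal_re]

theorem integral_rpow_mul_one_sub_rpow {u v : ℝ} (hu : 0 < u) (hv : 0 < v) :
    ∫ y in (0 : ℝ)..1, y ^ (u - 1) * (1 - y) ^ (v - 1) = beta u v := by
  rw [beta_eq_betaIntegralReal u v hu hv, Complex.betaIntegral,
    ← Complex.ofReal_re (∫ y in (0 : ℝ)..1, _), ← intervalIntegral.integral_ofReal]
  congr 1
  refine intervalIntegral.integral_congr fun y hy ↦ ?_
  rw [uIcc_of_le zero_le_one] at hy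
  exact ofReal_rpow_mul_one_sub_rpow hy u v

theorem beta_add_natCast {u v : ℝ} (hu : 0 < u) (hv : 0 < v) (n : ℕ) :
    beta u (v + n)
      = beta u v * ((ascPochhammer ℝ n).eval v / (ascPochhammer ℝ n).eval (u + v)) := by
  rw [beta, beta, ← add_assoc, Gamma_add_natCast_eq_mul_ascPochhammer hv,
    Gamma_add_natCast_eq_mul_ascPochhammer (add_pos hu hv), ← mul_assoc, mul_div_mul_comm]

end Gamma

section Pochhammer

open Polynomial

theorem ascPochhammer_eval_eq_prod_range {R : Type*} [CommSemiring R] (n : ℕ) (x : R) :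
    (ascPochhammer R n).eval x = ∏ j ∈ Finset.range n, (x + j) := by
  induction n with
  | zero => simp
  | succ n ih => rw [ascPochhammer_succ_eval, ih, Finset.prod_range_succ]

theorem ascPochhammer_eval_ne_zero {K : Type*} [Field K] {x : K} (hx : ∀ m : ℕ, x + m ≠ 0)
    (n : ℕ) : (ascPochhammer K n).eval x ≠ 0 := by
  rw [ascPochhammer_eval_eq_prod_range]
  exact Finset.prod_ne_zero_iff.2 fun j _ ↦ hx j

theorem ascPochhammer_succ_eval_left {R : Type*} [CommSemiring R] (n : ℕ) (x : R) :
    (ascPochhammer R (n + 1)).eval x = x * (ascPochhammer R n).eval (x + 1) := by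
  simp [ascPochhammer_succ_left]

theorem ascPochhammer_eval_mul_eval_add_natCast {R : Type*} [CommSemiring R] (m k : ℕ) (x : R) :
    (ascPochhammer R m).eval x * (ascPochhammer R k).eval (x + m)
      = (ascPochhammer R (m + k)).eval x := by
  simp [← ascPochhammer_mul]

theorem ascPochhammer_eval_neg_add_natCast {R : Type*} [CommRing R] (n : ℕ) (x : R) :
    (ascPochhammer R n).eval (-(x + n)) = (-1) ^ n * (ascPochhammer R n).eval (x + 1) := by
  rw [ascPochhammer_eval_neg_eq_descPochhammer, descPochhammer_eval_eq_ascPochhammer,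
    add_sub_cancel_right]

theorem sum_neg_one_pow_mul_choose_mul_ascPochhammer_div {K : Type*} [Field K] (n : ℕ) (c : K)
    {d : K} (hd : ∀ m : ℕ, d + m ≠ 0) :
    ∑ m ∈ Finset.range (n + 1), (-1) ^ m * (n.choose m : K) *
        ((ascPochhammer K m).eval c / (ascPochhammer K m).eval d)
      = (ascPochhammer K n).eval (d - c) / (ascPochhammer K n).eval d := by
  have hne := ascPochhammer_eval_ne_zero hd
  have smeval_eq (m : ℕ) (x : K) :
      (descPochhammer ℤ m).smeval x = (descPochhammer K m).eval x := by
    rw [descPochhammer_smeval_eq_ascPochhammer, ascPochhammer_smeval_eq_eval,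
      descPochhammer_eval_eq_ascPochhammer]
  have vandermonde := Ring.descPochhammer_smeval_add n (Commute.all (-c) (d + n - 1))
  simp only [Finset.Nat.sum_antidiagonal_eq_sum_range_succ_mk, smeval_eq] at vandermonde
  rw [descPochhammer_eval_eq_ascPochhammer, show -c + (d + n - 1) - n + 1 = d - c by ring]
    at vandermonde
  rw [eq_div_iff (hne n), vandermonde, Finset.sum_mul]
  refine Finset.sum_congr rfl fun m hm ↦ ?_
  obtain ⟨k, rfl⟩ := Nat.exists_eq_add_of_le (Finset.mem_range_succ_iff.1 hm)
  have hc : (ascPochhammer K m).eval c = (-1) ^ m * (descPochhammer K m).eval (-c) := by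
    rw [← ascPochhammer_eval_neg_eq_descPochhammer, neg_neg]
  have hd : (descPochhammer K k).eval (d + (m + k : ℕ) - 1)
      = (ascPochhammer K k).eval (d + m) := by
    rw [descPochhammer_eval_eq_ascPochhammer]
    congr 1
    push_cast
    ring
  have hm0 := hne m
  rw [hc, Nat.add_sub_cancel_left, hd, ← ascPochhammer_eval_mul_eval_add_natCast]
  field_simp
  simp [← pow_mul]

end Pochhammer

section Lagrange

open Polynomial

theorem prod_range_succ_erase_natCast_sub {R : Type*} [CommRing R] {n i : ℕ} (hi : i ≤ n) :
    ∏ j ∈ (Finset.range (n + 1)).erase i, ((i : R) - j)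
      = (-1) ^ (n - i) * (i.factorial * (n - i).factorial) := by
  obtain ⟨k, rfl⟩ := Nat.exists_eq_add_of_le hi
  have hsplit : (Finset.range (i + k + 1)).erase i
      = Finset.range i ∪ Finset.Ico (i + 1) (i + 1 + k) := by
    ext j
    simp only [Finset.mem_erase, Finset.mem_union, Finset.mem_range, Finset.mem_Ico]
    omega
  have hdisj : Disjoint (Finset.range i) (Finset.Ico (i + 1) (i + 1 + k)) :=
    Finset.disjoint_left.2 fun j hj hj' ↦ by
      simp only [Finset.mem_range, Finset.mem_Ico] at hj hj'
      omega
  have hbelow : ∏ j ∈ Finset.range i, ((i : R) - j) = i.factorial := by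
    rw [← Finset.prod_range_reflect, ← Finset.prod_range_add_one_eq_factorial, Nat.cast_prod]
    refine Finset.prod_congr rfl fun j hj ↦ ?_
    obtain ⟨l, rfl⟩ := Nat.exists_eq_add_of_lt (Finset.mem_range.1 hj)
    rw [show j + l + 1 - 1 - j = l by omega]
    push_cast
    ring
  have habove : ∏ j ∈ Finset.Ico (i + 1) (i + 1 + k), ((i : R) - j)
      = (-1) ^ k * k.factorial := by
    rw [Finset.prod_Ico_eq_prod_range, Nat.add_sub_cancel_left,
      ← Finset.prod_range_add_one_eq_factorial, Nat.cast_prod]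
    calc ∏ j ∈ Finset.range k, ((i : R) - (i + 1 + j : ℕ))
        = ∏ j ∈ Finset.range k, -((j + 1 : ℕ) : R) :=
          Finset.prod_congr rfl fun j _ ↦ by push_cast; ring
      _ = (-1) ^ k * ∏ j ∈ Finset.range k, ((j + 1 : ℕ) : R) := by
          rw [Finset.prod_neg, Finset.card_range]
  rw [hsplit, Finset.prod_union hdisj, hbelow, habove, Nat.add_sub_cancel_left]
  ring

theorem nodalWeight_range_natCast {K : Type*} [Field K] [CharZero K] {n i : ℕ} (hi : i ≤ n) :
    Lagrange.nodalWeight (Finset.range (n + 1)) (fun j : ℕ ↦ (j : K)) i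
      = (-1) ^ (n + i) * n.choose i / n.factorial := by
  rw [Lagrange.nodalWeight, Finset.prod_inv_distrib, prod_range_succ_erase_natCast_sub hi,
    Nat.cast_choose K hi]
  obtain ⟨k, rfl⟩ := Nat.exists_eq_add_of_le hi
  have hn : ((i + k).factorial : K) ≠ 0 := by exact_mod_cast (i + k).factorial_ne_zero
  have hi0 : (i.factorial : K) ≠ 0 := by exact_mod_cast i.factorial_ne_zero
  have hk : (k.factorial : K) ≠ 0 := by exact_mod_cast k.factorial_ne_zero
  rw [Nat.add_sub_cancel_left, show i + k + i = 2 * i + k by ring, pow_add, pow_mul]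
  rcases neg_one_pow_eq_or K k with h | h <;> rw [h] <;> field_simp <;> simp

theorem eval_neg_nodal_range_natCast {R : Type*} [CommRing R] (n : ℕ) (x : R) :
    (Lagrange.nodal (Finset.range n) fun j : ℕ ↦ (j : R)).eval (-x)
      = (-1) ^ n * (ascPochhammer R n).eval x := by
  rw [Lagrange.eval_nodal, ascPochhammer_eval_eq_prod_range]
  calc ∏ j ∈ Finset.range n, (-x - (j : R))
      = ∏ j ∈ Finset.range n, -(x + (j : R)) := Finset.prod_congr rfl fun j _ ↦ by ring
    _ = (-1) ^ n * ∏ j ∈ Finset.range n, (x + (j : R)) := by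
        rw [Finset.prod_neg, Finset.card_range]

theorem sum_neg_one_pow_mul_choose_mul_eval_div {K : Type*} [Field K] [CharZero K] {n : ℕ}
    {T : K[X]} (hT : T.natDegree ≤ n) {x : K} (hx : ∀ m : ℕ, x + m ≠ 0) :
    ∑ m ∈ Finset.range (n + 1), (-1) ^ m * (n.choose m : K) * (T.eval (m : K) / (x + m))
      = n.factorial * T.eval (-x) / (ascPochhammer K (n + 1)).eval x := by
  have hinterp : T = Lagrange.interpolate (Finset.range (n + 1)) (fun j : ℕ ↦ (j : K))
      fun j ↦ T.eval (j : K) :=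
    Lagrange.eq_interpolate Nat.cast_injective.injOn
      (by simpa using (degree_le_of_natDegree_le hT).trans_lt (by exact_mod_cast n.lt_succ_self))
  have hnodes : ∀ j ∈ Finset.range (n + 1), -x ≠ (j : K) := fun j _ h ↦
    hx j (by rw [← h, add_neg_cancel])
  have hterm : ∀ m ∈ Finset.range (n + 1),
      (-1) ^ m * (n.choose m : K) * (T.eval (m : K) / (x + m))
        = (-1) ^ (n + 1) * n.factorial *
          (Lagrange.nodalWeight (Finset.range (n + 1)) (fun j : ℕ ↦ (j : K)) m *
            (-x - m)⁻¹ * T.eval (m : K)) := by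
    intro m hm
    have hxm := hx m
    have hn0 : (n.factorial : K) ≠ 0 := by exact_mod_cast n.factorial_ne_zero
    rw [nodalWeight_range_natCast (Finset.mem_range_succ_iff.1 hm), ← neg_add']
    field_simp
    rw [mul_assoc _ ((-1) ^ (n + 1) : K), ← pow_add, show n + 1 + (n + m) = 2 * n + m + 1 by ring,
      pow_succ, pow_add, pow_mul]
    ring
  rw [Finset.sum_congr rfl hterm, ← Finset.mul_sum, eq_div_iff (ascPochhammer_eval_ne_zero hx _)]
  conv_rhs =>
    rw [hinterp, Lagrange.eval_interpolate_not_at_node _ hnodes, eval_neg_nodal_range_natCast]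
  ring

end Lagrange

section Jacobi

open Polynomial

/-- Coefficient of `y ^ m` in the hypergeometric expansion
`₂F₁(-n, n + a + b + 1; a + 1; y)` of the normalized Jacobi polynomial. -/
def jacobiCoeff (a b : ℝ) (n m : ℕ) : ℝ :=
  (-1) ^ m * n.choose m *
    ((ascPochhammer ℝ m).eval (n + a + b + 1) / (ascPochhammer ℝ m).eval (a + 1))

/-- The Jacobi polynomial of degree `n`, normalized to take the value `1` at `x = 1`, as a
polynomial in the variable `y = (1 - x) / 2`. -/
def jacobiNormalized (a b : ℝ) (n : ℕ) : ℝ[X] :=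
  ∑ m ∈ Finset.range (n + 1), C (jacobiCoeff a b n m) * X ^ m

variable {a b : ℝ}

theorem jacobiCoeff_zero_right (a b : ℝ) (n : ℕ) : jacobiCoeff a b n 0 = 1 := by
  simp [jacobiCoeff]

theorem jacobiCoeff_eq_zero_of_lt (a b : ℝ) {n m : ℕ} (h : n < m) : jacobiCoeff a b n m = 0 := by
  simp [jacobiCoeff, Nat.choose_eq_zero_of_lt h]

theorem coeff_jacobiNormalized (a b : ℝ) (n m : ℕ) :
    (jacobiNormalized a b n).coeff m = jacobiCoeff a b n m := by
  simp only [jacobiNormalized, finsetSum_coeff, coeff_C_mul_X_pow, Finset.sum_ite_eq,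
    Finset.mem_range]
  split_ifs with h
  · rfl
  · exact (jacobiCoeff_eq_zero_of_lt a b (by omega)).symm

theorem natDegree_jacobiNormalized_le (a b : ℝ) (n : ℕ) :
    (jacobiNormalized a b n).natDegree ≤ n :=
  natDegree_le_iff_coeff_eq_zero.2 fun m hm ↦ by
    rw [coeff_jacobiNormalized, jacobiCoeff_eq_zero_of_lt a b hm]

theorem eval_jacobiNormalized (a b : ℝ) (n : ℕ) (y : ℝ) :
    (jacobiNormalized a b n).eval y = ∑ m ∈ Finset.range (n + 1), jacobiCoeff a b n m * y ^ m := by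
  simp [jacobiNormalized, eval_finsetSum]

theorem eval_zero_jacobiNormalized (a b : ℝ) (n : ℕ) : (jacobiNormalized a b n).eval 0 = 1 := by
  rw [← coeff_zero_eq_eval_zero, coeff_jacobiNormalized, jacobiCoeff_zero_right]

theorem eval_one_jacobiNormalized (ha : -1 < a) (b : ℝ) (n : ℕ) :
    (jacobiNormalized a b n).eval 1
      = (-1) ^ n * ((ascPochhammer ℝ n).eval (b + 1) / (ascPochhammer ℝ n).eval (a + 1)) := by
  have hd (m : ℕ) : a + 1 + m ≠ 0 := by positivity [show 0 < a + 1 by linarith]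
  simp only [eval_jacobiNormalized, one_pow, mul_one, jacobiCoeff]
  rw [sum_neg_one_pow_mul_choose_mul_ascPochhammer_div n _ hd,
    show a + 1 - (n + a + b + 1) = -(b + n) by ring, ascPochhammer_eval_neg_add_natCast,
    mul_div_assoc]

theorem sq_eval_one_jacobiNormalized_le_one (hb : -1 < b) (hba : b ≤ a) (n : ℕ) :
    (jacobiNormalized a b n).eval 1 ^ 2 ≤ 1 := by
  have hpos := ascPochhammer_pos n (b + 1) (by linarith)
  have hle : (ascPochhammer ℝ n).eval (b + 1) ≤ (ascPochhammer ℝ n).eval (a + 1) := by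
    simp only [ascPochhammer_eval_eq_prod_range]
    exact Finset.prod_le_prod (fun j _ ↦ by positivity [show 0 < b + 1 by linarith])
      fun j _ ↦ by gcongr
  rw [eval_one_jacobiNormalized (by linarith), mul_pow, ← pow_mul, mul_comm n 2, pow_mul,
    neg_one_sq, one_pow, one_mul]
  exact pow_le_one₀ (div_nonneg hpos.le (hpos.le.trans hle))
    (div_le_one_of_le₀ hle (hpos.le.trans hle))

theorem jacobiCoeff_succ (ha : -1 < a) (b : ℝ) (n m : ℕ) :
    (m + 1) * (m + a + 1) * jacobiCoeff a b n (m + 1)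
      = (m - n) * (m + n + a + b + 1) * jacobiCoeff a b n m := by
  have hchoose : (n.choose (m + 1) : ℝ) * (m + 1) = n.choose m * (n - m) := by
    rcases le_or_gt m n with h | h
    · exact_mod_cast n.choose_succ_right_eq m
    · simp [Nat.choose_eq_zero_of_lt h, Nat.choose_eq_zero_of_lt (h.trans m.lt_succ_self)]
  have hm : a + 1 + m ≠ 0 := by positivity [show 0 < a + 1 by linarith]
  have hratio : (m + a + 1) * ((n + a + b + 1 + m) / (a + 1 + m)) = n + a + b + 1 + m := by
    rw [show m + a + 1 = a + 1 + m by ring, mul_div_cancel₀ _ hm]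
  simp only [jacobiCoeff, ascPochhammer_succ_eval, pow_succ, mul_div_mul_comm]
  set ρ := (ascPochhammer ℝ m).eval (n + a + b + 1) / (ascPochhammer ℝ m).eval (a + 1)
  linear_combination -(-1) ^ m * ρ * (m + 1) * n.choose (m + 1) * hratio
    - (-1) ^ m * ρ * (n + a + b + 1 + m) * hchoose

theorem jacobiNormalized_ode (ha : -1 < a) (b : ℝ) (n : ℕ) :
    X * (1 - X) * derivative (derivative (jacobiNormalized a b n))
      + (C (a + 1) - C (a + b + 2) * X) * derivative (jacobiNormalized a b n)
      + C (n * (n + a + b + 1)) * jacobiNormalized a b n = 0 := by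
  rw [show X * (1 - X) * derivative (derivative (jacobiNormalized a b n))
      + (C (a + 1) - C (a + b + 2) * X) * derivative (jacobiNormalized a b n)
      = X * derivative (derivative (jacobiNormalized a b n))
        - X * (X * derivative (derivative (jacobiNormalized a b n)))
        + C (a + 1) * derivative (jacobiNormalized a b n)
        - C (a + b + 2) * (X * derivative (jacobiNormalized a b n)) by ring]
  ext m
  have hrec := jacobiCoeff_succ ha b n m
  rcases m with _ | _ | m <;>
  · simp only [coeff_add, coeff_sub, coeff_C_mul, coeff_X_mul, coeff_X_mul_zero, coeff_derivative,
      coeff_jacobiNormalized, coeff_zero]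
    push_cast at hrec ⊢
    linear_combination hrec

/-- Sonine's function of the normalized Jacobi polynomial `Q`, a majorant of
`n (n + a + b + 1) Q ^ 2` whose derivative is `Q' ^ 2` times an affine function. -/
def jacobiSonine (a b : ℝ) (n : ℕ) : ℝ[X] :=
  C (n * (n + a + b + 1)) * jacobiNormalized a b n ^ 2
    + X * (1 - X) * derivative (jacobiNormalized a b n) ^ 2

theorem derivative_jacobiSonine (ha : -1 < a) (b : ℝ) (n : ℕ) :
    derivative (jacobiSonine a b n)
      = derivative (jacobiNormalized a b n) ^ 2 * (C (2 * (a + b + 1)) * X - C (2 * a + 1)) := by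
  have ode := jacobiNormalized_ode ha b n
  simp only [jacobiSonine, derivative_add, derivative_mul, derivative_C, derivative_pow,
    derivative_X, derivative_sub, derivative_one, C_add, C_mul, map_ofNat, map_one,
    Nat.cast_ofNat] at ode ⊢
  linear_combination 2 * derivative (jacobiNormalized a b n) * ode

theorem eval_jacobiSonine (a b : ℝ) (n : ℕ) (y : ℝ) :
    (jacobiSonine a b n).eval y = n * (n + a + b + 1) * (jacobiNormalized a b n).eval y ^ 2
      + y * (1 - y) * (derivative (jacobiNormalized a b n)).eval y ^ 2 := by
  simp [jacobiSonine]

theorem eval_jacobiSonine_le (ha : -1 / 2 ≤ a) (hb : -1 < b) (hba : b ≤ a) {n : ℕ} (hn : 1 ≤ n)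
    {y : ℝ} (hy : y ∈ Icc 0 1) : (jacobiSonine a b n).eval y ≤ n * (n + a + b + 1) := by
  have hn' : (1 : ℝ) ≤ n := by exact_mod_cast hn
  set F := jacobiSonine a b n with hF
  have deriv_F (x : ℝ) : deriv (fun x ↦ F.eval x) x
      = (derivative (jacobiNormalized a b n)).eval x ^ 2
        * (2 * (a + b + 1) * x - (2 * a + 1)) := by
    simp [hF, Polynomial.deriv, derivative_jacobiSonine (show -1 < a by linarith)]
  rcases le_or_gt (2 * (a + b + 1) * y) (2 * a + 1) with h | h
  · have anti : AntitoneOn (fun x ↦ F.eval x) (Icc 0 y) := by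
      refine antitoneOn_of_deriv_nonpos (convex_Icc _ _) F.continuous.continuousOn
        F.differentiable.differentiableOn fun x hx ↦ ?_
      rw [interior_Icc] at hx
      rw [deriv_F]
      exact mul_nonpos_of_nonneg_of_nonpos (sq_nonneg _) (by nlinarith [hx.1, hx.2])
    refine (anti (left_mem_Icc.2 hy.1) (right_mem_Icc.2 hy.1) hy.1).trans_eq ?_
    simp [hF, eval_jacobiSonine, eval_zero_jacobiNormalized]
  · have mono : MonotoneOn (fun x ↦ F.eval x) (Icc y 1) := by
      refine monotoneOn_of_deriv_nonneg (convex_Icc _ _) F.continuous.continuousOn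
        F.differentiable.differentiableOn fun x hx ↦ ?_
      rw [interior_Icc] at hx
      rw [deriv_F]
      have hab : 0 < a + b + 1 := pos_of_mul_pos_left (by linarith) hy.1
      exact mul_nonneg (sq_nonneg _) (by nlinarith [hx.1])
    refine (mono (left_mem_Icc.2 hy.2) (right_mem_Icc.2 hy.2) hy.2).trans ?_
    have hl : 0 ≤ n * (n + a + b + 1) := mul_nonneg n.cast_nonneg (by linarith)
    simpa [hF, eval_jacobiSonine] using
      mul_le_of_le_one_right hl (sq_eval_one_jacobiNormalized_le_one hb hba n)

theorem sq_eval_jacobiNormalized_le_one (ha : -1 / 2 ≤ a) (hb : -1 < b) (hba : b ≤ a) (n : ℕ)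
    {y : ℝ} (hy : y ∈ Icc 0 1) : (jacobiNormalized a b n).eval y ^ 2 ≤ 1 := by
  rcases n.eq_zero_or_pos with rfl | hn
  · simp [jacobiNormalized, jacobiCoeff_zero_right]
  have hn' : (1 : ℝ) ≤ n := by exact_mod_cast hn
  have hl : 0 < n * (n + a + b + 1) := mul_pos (by linarith) (by linarith)
  have hdom : n * (n + a + b + 1) * (jacobiNormalized a b n).eval y ^ 2
      ≤ (jacobiSonine a b n).eval y := by
    rw [eval_jacobiSonine]
    exact le_add_of_nonneg_right
      (mul_nonneg (mul_nonneg hy.1 (sub_nonneg.2 hy.2)) (sq_nonneg _))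
  refine le_of_mul_le_mul_left ?_ hl
  rw [mul_one]
  exact hdom.trans (eval_jacobiSonine_le ha hb hba hn hy)

end Jacobi

section JacobiIntegrals

open Polynomial ProbabilityTheory

theorem intervalIntegrable_eval_mul_rpow_mul_one_sub_rpow (P : ℝ[X]) {u v : ℝ} (hu : -1 < u)
    (hv : -1 < v) : IntervalIntegrable (fun y ↦ P.eval y * (y ^ u * (1 - y) ^ v)) volume 0 1 := by
  have h := intervalIntegrable_rpow_mul_one_sub_rpow (neg_lt_iff_pos_add.1 hu)
    (neg_lt_iff_pos_add.1 hv)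
  simp only [add_sub_cancel_right] at h
  exact h.continuousOn_mul P.continuous.continuousOn

theorem integral_eval_mul_rpow_mul_one_sub_rpow {P : ℝ[X]} {n : ℕ} (hP : P.natDegree ≤ n)
    {u v : ℝ} (hu : 0 < u) (hv : 0 < v) :
    ∫ y in (0 : ℝ)..1, P.eval y * (y ^ (u - 1) * (1 - y) ^ (v - 1))
      = ∑ m ∈ Finset.range (n + 1), P.coeff m * beta (u + m) v := by
  have expand : EqOn (fun y ↦ P.eval y * (y ^ (u - 1) * (1 - y) ^ (v - 1)))
      (fun y ↦ ∑ m ∈ Finset.range (n + 1),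
        P.coeff m * (y ^ (u + m - 1) * (1 - y) ^ (v - 1))) (Ioo 0 1) := by
    intro y hy
    simp only [eval_eq_sum_range' (Nat.lt_succ_of_le hP), Finset.sum_mul]
    refine Finset.sum_congr rfl fun m _ ↦ ?_
    rw [add_sub_right_comm, rpow_add_natCast hy.1.ne']
    ring
  have hum (m : ℕ) : 0 < u + m := by positivity
  rw [intervalIntegral.integral_congr_Ioo_of_le zero_le_one expand,
    intervalIntegral.integral_finsetSum fun m _ ↦
      (intervalIntegrable_rpow_mul_one_sub_rpow (hum m) hv).const_mul _]
  simp only [intervalIntegral.integral_const_mul, integral_rpow_mul_one_sub_rpow (hum _) hv]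

variable {a b : ℝ}

/-- The degree `n` polynomial `(a + X)_k (a + b + k + 1 + X)_{n - k}`, through whose values at
`m = 0, …, n` the coefficients of the normalized Jacobi polynomial enter its `k`-th moment. -/
def jacobiMomentPoly (a b : ℝ) (n k : ℕ) : ℝ[X] :=
  (ascPochhammer ℝ k).comp (X + C a) * (ascPochhammer ℝ (n - k)).comp (X + C (a + b + k + 1))

theorem natDegree_jacobiMomentPoly_le (a b : ℝ) {n k : ℕ} (hk : k ≤ n) :
    (jacobiMomentPoly a b n k).natDegree ≤ n := by
  refine natDegree_mul_le.trans_eq ?_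
  simp only [natDegree_comp, ascPochhammer_natDegree, natDegree_X_add_C]
  omega

theorem eval_jacobiMomentPoly (a b : ℝ) (n k : ℕ) (x : ℝ) :
    (jacobiMomentPoly a b n k).eval x
      = (ascPochhammer ℝ k).eval (a + x) * (ascPochhammer ℝ (n - k)).eval (a + b + k + 1 + x) := by
  simp [jacobiMomentPoly, add_comm x]

theorem jacobiCoeff_mul_beta (ha : 0 < a) (hb : -1 < b) {n k : ℕ} (hk : k ≤ n) (m : ℕ) :
    jacobiCoeff a b n m * beta (a + k + m) (b + 1)
      = a * beta a (b + 1) / (ascPochhammer ℝ n).eval (a + b + 1)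
        * ((-1) ^ m * n.choose m * ((jacobiMomentPoly a b n k).eval (m : ℝ) / (a + m))) := by
  have hab : 0 < a + b + 1 := by linarith
  have shift : (ascPochhammer ℝ m).eval a * (a + m) = a * (ascPochhammer ℝ m).eval (a + 1) := by
    rw [← ascPochhammer_succ_eval, ascPochhammer_succ_eval_left]
  have num : Real.Gamma (a + k + m)
      = Real.Gamma a * (ascPochhammer ℝ m).eval a * (ascPochhammer ℝ k).eval (a + m) := by
    rw [← Gamma_add_natCast_eq_mul_ascPochhammer ha, add_right_comm,
      Gamma_add_natCast_eq_mul_ascPochhammer (by positivity)]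
  have den : Real.Gamma (a + k + m + (b + 1))
        * (ascPochhammer ℝ (n - k)).eval (a + b + k + 1 + m)
      = Real.Gamma (a + (b + 1)) * (ascPochhammer ℝ n).eval (a + b + 1)
        * (ascPochhammer ℝ m).eval (n + a + b + 1) := by
    rw [show a + b + k + 1 + m = a + k + m + (b + 1) by ring,
      ← Gamma_add_natCast_eq_mul_ascPochhammer (by linarith [(k + m).cast_nonneg (α := ℝ)]),
      Nat.cast_sub hk, show (n : ℝ) + a + b + 1 = a + b + 1 + n by ring,
      show a + (b + 1) = a + b + 1 by ring,
      ← Gamma_add_natCast_eq_mul_ascPochhammer hab,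
      ← Gamma_add_natCast_eq_mul_ascPochhammer (by positivity)]
    ring_nf
  have hΓ : 0 < Real.Gamma (a + k + m + (b + 1)) :=
    Real.Gamma_pos_of_pos (by linarith [(k + m : ℕ).cast_nonneg (α := ℝ)])
  have hΓ' : 0 < Real.Gamma (a + (b + 1)) := Real.Gamma_pos_of_pos (by linarith)
  have h1 := ascPochhammer_pos m (a + 1) (by positivity)
  have hn := ascPochhammer_pos n (a + b + 1) hab
  rw [jacobiCoeff, beta, beta, eval_jacobiMomentPoly, num]
  have : a + m ≠ 0 := by positivity
  field_simp
  linear_combination n.choose m * (ascPochhammer ℝ k).eval (a + m) * Real.Gamma (b + 1)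
    * (Real.Gamma (a + (b + 1)) * (ascPochhammer ℝ n).eval (a + b + 1)
      * (ascPochhammer ℝ m).eval (n + a + b + 1) * shift
      - a * (ascPochhammer ℝ m).eval (a + 1) * den)

theorem integral_jacobiNormalized_mul_rpow (ha : 0 < a) (hb : -1 < b) {n k : ℕ} (hk : k ≤ n) :
    ∫ y in (0 : ℝ)..1, (jacobiNormalized a b n).eval y * (y ^ (a + k - 1) * (1 - y) ^ b)
      = a * beta a (b + 1) / (ascPochhammer ℝ n).eval (a + b + 1)
        * (n.factorial * (jacobiMomentPoly a b n k).eval (-a)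
          / (ascPochhammer ℝ (n + 1)).eval a) := by
  have h := integral_eval_mul_rpow_mul_one_sub_rpow (natDegree_jacobiNormalized_le a b n)
    (u := a + k) (v := b + 1) (by positivity) (by linarith)
  simp only [add_sub_cancel_right, coeff_jacobiNormalized, jacobiCoeff_mul_beta ha hb hk,
    ← Finset.mul_sum] at h
  rw [h, sum_neg_one_pow_mul_choose_mul_eval_div (natDegree_jacobiMomentPoly_le a b hk)
    fun m ↦ by positivity]

theorem integral_jacobiNormalized_mul_rpow_eq_zero (ha : 0 < a) (hb : -1 < b) {n k : ℕ}
    (hk : k ≤ n) (hk0 : k ≠ 0) :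
    ∫ y in (0 : ℝ)..1, (jacobiNormalized a b n).eval y * (y ^ (a + k - 1) * (1 - y) ^ b)
      = 0 := by
  rw [integral_jacobiNormalized_mul_rpow ha hb hk, eval_jacobiMomentPoly, add_neg_cancel,
    ascPochhammer_ne_zero_eval_zero ℝ hk0]
  simp

theorem integral_jacobiNormalized_mul (ha : 0 < a) (hb : -1 < b) (n : ℕ) :
    ∫ y in (0 : ℝ)..1, (jacobiNormalized a b n).eval y * (y ^ (a - 1) * (1 - y) ^ b)
      = beta a (b + 1 + n) * (n.factorial / (ascPochhammer ℝ n).eval (a + 1)) := by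
  have h := integral_jacobiNormalized_mul_rpow ha hb n.zero_le
  simp only [Nat.cast_zero, add_zero, eval_jacobiMomentPoly, ascPochhammer_zero, eval_one, one_mul,
    Nat.sub_zero, ascPochhammer_succ_eval_left] at h
  rw [h, beta_add_natCast ha (by linarith), show a + b + 1 + -a = b + 1 by ring, ← add_assoc]
  field_simp

theorem integral_sq_jacobiNormalized_mul (ha : 0 < a) (hb : -1 < b) (n : ℕ) :
    ∫ y in (0 : ℝ)..1, (jacobiNormalized a b n).eval y ^ 2 * (y ^ (a - 1) * (1 - y) ^ b)
      = beta a (b + 1 + n) * (n.factorial / (ascPochhammer ℝ n).eval (a + 1)) := by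
  set Q := jacobiNormalized a b n with hQ
  have expand : EqOn (fun y ↦ Q.eval y ^ 2 * (y ^ (a - 1) * (1 - y) ^ b))
      (fun y ↦ ∑ k ∈ Finset.range (n + 1),
        jacobiCoeff a b n k * (Q.eval y * (y ^ (a + k - 1) * (1 - y) ^ b)))
      (Ioo 0 1) := by
    intro y hy
    calc Q.eval y ^ 2 * (y ^ (a - 1) * (1 - y) ^ b)
        = (∑ k ∈ Finset.range (n + 1), jacobiCoeff a b n k * y ^ k)
            * (Q.eval y * (y ^ (a - 1) * (1 - y) ^ b)) := by
          rw [← eval_jacobiNormalized, ← hQ]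
          ring
      _ = _ := by
          refine (Finset.sum_mul _ _ _).trans (Finset.sum_congr rfl fun k _ ↦ ?_)
          rw [add_sub_right_comm, rpow_add_natCast hy.1.ne']
          ring
  rw [intervalIntegral.integral_congr_Ioo_of_le zero_le_one expand,
    intervalIntegral.integral_finsetSum fun k _ ↦
      (intervalIntegrable_eval_mul_rpow_mul_one_sub_rpow Q
        (by linarith [k.cast_nonneg (α := ℝ)]) hb).const_mul _]
  simp only [intervalIntegral.integral_const_mul]
  rw [Finset.sum_eq_single_of_mem 0 (by simp) fun k hk hk0 ↦ by
    rw [hQ, integral_jacobiNormalized_mul_rpow_eq_zero ha hb (Finset.mem_range_succ_iff.1 hk) hk0,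
      mul_zero]]
  simpa [jacobiCoeff_zero_right] using integral_jacobiNormalized_mul ha hb n

end JacobiIntegrals

section WeightedIntegrals

theorem intervalIntegrable_mul_rpow {f : ℝ → ℝ} (hf : ContinuousOn f (Icc 0 1)) {t c d : ℝ}
    (ht : -1 < t) (hc : c ∈ Icc 0 1) (hd : d ∈ Icc 0 1) :
    IntervalIntegrable (fun y ↦ f y * y ^ t) volume c d :=
  (intervalIntegral.intervalIntegrable_rpow' ht).continuousOn_mul
    (hf.mono (uIcc_subset_Icc hc hd))

theorem integral_mul_rpow_le_rpow_div {f : ℝ → ℝ} (hf : ContinuousOn f (Icc 0 1))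
    (hf1 : ∀ y ∈ Icc 0 1, f y ≤ 1) {t δ : ℝ} (ht : -1 < t) (hδ : δ ∈ Icc 0 1) :
    ∫ y in (0 : ℝ)..δ, f y * y ^ t ≤ δ ^ (t + 1) / (t + 1) := calc
  _ ≤ ∫ y in (0 : ℝ)..δ, y ^ t :=
    intervalIntegral.integral_mono_on hδ.1 (intervalIntegrable_mul_rpow hf ht (by simp) hδ)
      (intervalIntegral.intervalIntegrable_rpow' ht) fun y hy ↦
        mul_le_of_le_one_left (rpow_nonneg hy.1 t) (hf1 y ⟨hy.1, hy.2.trans hδ.2⟩)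
  _ = δ ^ (t + 1) / (t + 1) := by
    rw [integral_rpow (Or.inl ht), zero_rpow (by linarith), sub_zero]

theorem integral_mul_rpow_le {f : ℝ → ℝ} (hf : ContinuousOn f (Icc 0 1))
    (hf0 : ∀ y ∈ Icc 0 1, 0 ≤ f y) (hf1 : ∀ y ∈ Icc 0 1, f y ≤ 1) {t p e : ℝ} (ht : -1 < t)
    (htp : t ≤ p) (he : 0 < e) :
    ∫ y in (0 : ℝ)..1, f y * y ^ t
      ≤ e ^ (t + 1) / (t + 1) + e ^ (t - p) * ∫ y in (0 : ℝ)..1, f y * y ^ p := by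
  set δ := min e 1
  have hδ0 : 0 < δ := lt_min he one_pos
  have hδ1 : δ ≤ 1 := min_le_right _ _
  have hδ : δ ∈ Icc 0 1 := ⟨hδ0.le, hδ1⟩
  have int {q c d : ℝ} (hq : -1 < q) (hc : c ∈ Icc 0 1) (hd : d ∈ Icc 0 1) :=
    intervalIntegrable_mul_rpow hf hq hc hd
  have h0 : (0 : ℝ) ∈ Icc 0 1 := by simp
  have h1 : (1 : ℝ) ∈ Icc 0 1 := by simp
  have hp : -1 < p := ht.trans_le htp
  have near : ∫ y in (0 : ℝ)..δ, f y * y ^ t ≤ e ^ (t + 1) / (t + 1) := by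
    have ht1 : 0 < t + 1 := by linarith
    refine (integral_mul_rpow_le_rpow_div hf hf1 ht hδ).trans ?_
    gcongr
    exact min_le_left _ _
  have far : ∫ y in δ..1, f y * y ^ t ≤ e ^ (t - p) * ∫ y in δ..1, f y * y ^ p := by
    rw [← intervalIntegral.integral_const_mul]
    refine intervalIntegral.integral_mono_on_of_le_Ioo hδ1 (int ht hδ h1)
      ((int hp hδ h1).const_mul _) fun y hy ↦ ?_
    have hy0 : 0 < y := hδ0.trans hy.1
    have hey : e ≤ y := (min_lt_iff.1 hy.1).resolve_right hy.2.not_gt |>.le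
    calc f y * y ^ t = f y * y ^ p * y ^ (t - p) := by
          rw [mul_assoc, ← rpow_add hy0, add_sub_cancel]
      _ ≤ f y * y ^ p * e ^ (t - p) :=
          mul_le_mul_of_nonneg_left (rpow_le_rpow_of_nonpos he hey (by linarith))
            (mul_nonneg (hf0 y ⟨hy0.le, hy.2.le⟩) (rpow_nonneg hy0.le p))
      _ = e ^ (t - p) * (f y * y ^ p) := mul_comm _ _
  have extend : ∫ y in δ..1, f y * y ^ p ≤ ∫ y in (0 : ℝ)..1, f y * y ^ p := by
    rw [← intervalIntegral.integral_add_adjacent_intervals (int hp h0 hδ) (int hp hδ h1)]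
    exact le_add_of_nonneg_left (intervalIntegral.integral_nonneg hδ0.le fun y hy ↦
      mul_nonneg (hf0 y ⟨hy.1, hy.2.trans hδ1⟩) (rpow_nonneg hy.1 p))
  rw [← intervalIntegral.integral_add_adjacent_intervals (int ht h0 hδ) (int ht hδ h1)]
  gcongr
  exact far.trans (by gcongr)

theorem integral_comp_mul_one_sub_rpow_mul_one_add_rpow (g : ℝ → ℝ) (t u : ℝ) :
    ∫ x in (-1 : ℝ)..1, g ((1 - x) / 2) * (1 - x) ^ t * (1 + x) ^ u
      = 2 ^ (t + u + 1) * ∫ y in (0 : ℝ)..1, g y * (y ^ t * (1 - y) ^ u) := by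
  have subst := intervalIntegral.integral_comp_sub_mul (a := 0) (b := 1)
    (fun x ↦ g ((1 - x) / 2) * (1 - x) ^ t * (1 + x) ^ u) (two_ne_zero (α := ℝ)) 1
  have rescale : EqOn
      (fun y : ℝ ↦ g ((1 - (1 - 2 * y)) / 2) * (1 - (1 - 2 * y)) ^ t * (1 + (1 - 2 * y)) ^ u)
      (fun y ↦ 2 ^ (t + u) * (g y * (y ^ t * (1 - y) ^ u))) (uIcc 0 1) := by
    intro y hy
    rw [uIcc_of_le zero_le_one] at hy
    dsimp only
    rw [sub_sub_cancel, mul_div_cancel_left₀ _ two_ne_zero,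
      show 1 + (1 - 2 * y) = 2 * (1 - y) by ring, mul_rpow two_pos.le hy.1,
      mul_rpow two_pos.le (sub_nonneg.2 hy.2), rpow_add two_pos]
    ring
  rw [intervalIntegral.integral_congr rescale, intervalIntegral.integral_const_mul,
    smul_eq_mul] at subst
  simp only [mul_zero, mul_one, sub_zero, show (1 : ℝ) - 2 = -1 by norm_num] at subst
  rw [rpow_add_one two_ne_zero]
  linarith

end WeightedIntegrals

section JacobiBounds

open Polynomial ProbabilityTheory

variable {a b : ℝ}

theorem integral_sq_jacobiNormalized_mul_le (ha : 1 ≤ a) (hb : -1 < b) {n : ℕ} (hn : 1 ≤ n) :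
    ∫ y in (0 : ℝ)..1, (jacobiNormalized a b n).eval y ^ 2 * (y ^ (a - 1) * (1 - y) ^ b)
      ≤ (Real.Gamma (a + 1) ^ (4 / (2 * a + 1)) * (n : ℝ) ^ (-2 : ℝ)) ^ a := by
  have hn0 : (0 : ℝ) < n := by exact_mod_cast hn
  have ha0 : 0 < a := by linarith
  have hΓ : 0 < Real.Gamma (a + 1) := Real.Gamma_pos_of_pos (by linarith)
  have factorial_div : n.factorial / (ascPochhammer ℝ n).eval (a + 1)
      = Real.Gamma (a + 1) * (Real.Gamma (n + 1) / Real.Gamma (n + 1 + a)) := by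
    rw [Real.Gamma_nat_eq_factorial, show n + 1 + a = a + 1 + n by ring,
      Gamma_add_natCast_eq_mul_ascPochhammer (by linarith)]
    field_simp
  calc _ = Real.Gamma a * Real.Gamma (a + 1)
        * ((Real.Gamma (b + 1 + n) / Real.Gamma (b + 1 + n + a))
          * (Real.Gamma (n + 1) / Real.Gamma (n + 1 + a))) := by
        rw [integral_sq_jacobiNormalized_mul ha0 hb, factorial_div, beta, add_comm a (b + 1 + n)]
        ring
    _ ≤ Real.Gamma (a + 1) ^ (4 * a / (2 * a + 1)) * ((n : ℝ) ^ (-a) * (n : ℝ) ^ (-a)) := by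
        have hΓb : 0 < Real.Gamma (b + 1 + n + a) := Real.Gamma_pos_of_pos (by linarith)
        have hΓb' : 0 < Real.Gamma (b + 1 + n) := Real.Gamma_pos_of_pos (by linarith)
        have hratio₁ := Gamma_div_Gamma_add_le hn0 (by linarith : (n : ℝ) ≤ b + 1 + n) ha
        have hratio₂ := Gamma_div_Gamma_add_le hn0 (by linarith : (n : ℝ) ≤ n + 1) ha
        gcongr
        exact Gamma_mul_Gamma_add_one_le ha
    _ = (Real.Gamma (a + 1) ^ (4 / (2 * a + 1)) * (n : ℝ) ^ (-2 : ℝ)) ^ a := by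
        rw [mul_rpow (by positivity) (by positivity), ← rpow_mul hΓ.le, ← rpow_mul hn0.le,
          ← rpow_add hn0]
        ring_nf

theorem continuous_sq_jacobiNormalized_mul_one_sub_rpow (a : ℝ) (hb : -1 < b) (n : ℕ) :
    Continuous fun y ↦ (jacobiNormalized a b n).eval y ^ 2 * (1 - y) ^ (b + 1) :=
  ((jacobiNormalized a b n).continuous.pow 2).mul
    ((continuous_rpow_const (by linarith)).comp (continuous_const.sub continuous_id))

theorem integral_sq_jacobiNormalized_mul_add_one_le (ha : 0 < a) (hb : -1 < b) (n : ℕ) :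
    ∫ y in (0 : ℝ)..1, (jacobiNormalized a b n).eval y ^ 2 * (1 - y) ^ (b + 1) * y ^ (a - 1)
      ≤ ∫ y in (0 : ℝ)..1, (jacobiNormalized a b n).eval y ^ 2 * (y ^ (a - 1) * (1 - y) ^ b) := by
  have ha' : -1 < a - 1 := by linarith
  have integrable := intervalIntegrable_eval_mul_rpow_mul_one_sub_rpow
    (jacobiNormalized a b n ^ 2) ha' hb
  simp only [eval_pow] at integrable
  refine intervalIntegral.integral_mono_on_of_le_Ioo zero_le_one
    (intervalIntegrable_mul_rpow
      (continuous_sq_jacobiNormalized_mul_one_sub_rpow a hb n).continuousOn ha' (by simp) (by simp))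
    integrable fun y hy ↦ ?_
  have hy0 : 0 ≤ y := hy.1.le
  have hpow : (1 - y) ^ (b + 1) ≤ (1 - y) ^ b :=
    rpow_le_rpow_of_exponent_ge (sub_pos.2 hy.2) (sub_le_self _ hy0) (by linarith)
  rw [mul_assoc, mul_comm (_ ^ (b + 1))]
  gcongr

theorem integral_sq_jacobiNormalized_mul_rpow_le (ha : 1 ≤ a) (hb : -1 < b) (hba : b ≤ a) {n : ℕ}
    (hn : 1 ≤ n) {t : ℝ} (ht : -1 < t) (hta : t ≤ a - 1) :
    ∫ y in (0 : ℝ)..1, (jacobiNormalized a b n).eval y ^ 2 * (y ^ t * (1 - y) ^ (b + 1))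
      ≤ (1 / (t + 1) + 1)
        * (Real.Gamma (a + 1) ^ (4 / (2 * a + 1)) * (n : ℝ) ^ (-2 : ℝ)) ^ (t + 1) := by
  set Q := jacobiNormalized a b n
  set e := Real.Gamma (a + 1) ^ (4 / (2 * a + 1)) * (n : ℝ) ^ (-2 : ℝ)
  have he0 : 0 < e := mul_pos (rpow_pos_of_pos (Real.Gamma_pos_of_pos (by linarith)) _)
    (rpow_pos_of_pos (by exact_mod_cast hn) _)
  set f : ℝ → ℝ := fun y ↦ Q.eval y ^ 2 * (1 - y) ^ (b + 1) with hf
  have f_cont : ContinuousOn f (Icc 0 1) :=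
    (continuous_sq_jacobiNormalized_mul_one_sub_rpow a hb n).continuousOn
  have f_nonneg : ∀ y ∈ Icc 0 1, 0 ≤ f y := fun y hy ↦
    mul_nonneg (sq_nonneg _) (rpow_nonneg (sub_nonneg.2 hy.2) _)
  have f_le_one : ∀ y ∈ Icc 0 1, f y ≤ 1 := fun y hy ↦
    mul_le_one₀ (sq_eval_jacobiNormalized_le_one (by linarith) hb hba n hy)
      (rpow_nonneg (sub_nonneg.2 hy.2) _)
      (rpow_le_one (sub_nonneg.2 hy.2) (sub_le_self _ hy.1) (by linarith))
  have moment_le : ∫ y in (0 : ℝ)..1, f y * y ^ (a - 1) ≤ e ^ a :=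
    (integral_sq_jacobiNormalized_mul_add_one_le (by linarith) hb n).trans
      (integral_sq_jacobiNormalized_mul_le ha hb hn)
  calc _ = ∫ y in (0 : ℝ)..1, f y * y ^ t := by
        refine intervalIntegral.integral_congr fun y _ ↦ ?_
        simp only [hf]
        ring
    _ ≤ e ^ (t + 1) / (t + 1) + e ^ (t - (a - 1)) * e ^ a :=
        (integral_mul_rpow_le f_cont f_nonneg f_le_one ht hta he0).trans (by gcongr)
    _ = (1 / (t + 1) + 1) * e ^ (t + 1) := by
        rw [← rpow_add he0, show t - (a - 1) + a = t + 1 by ring]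
        ring

theorem sum_choose_mul_Gamma_div_eq_mul_eval (ha : -1 < a) {n : ℕ} (hab : 0 < a + b + n + 1)
    (x : ℝ) :
    ∑ m ∈ Finset.range (n + 1),
        n.choose m * (Real.Gamma (a + b + n + m + 1) / Real.Gamma (a + m + 1)) * ((x - 1) / 2) ^ m
      = Real.Gamma (a + b + n + 1) / Real.Gamma (a + 1)
        * (jacobiNormalized a b n).eval ((1 - x) / 2) := by
  rw [eval_jacobiNormalized, Finset.mul_sum]
  refine Finset.sum_congr rfl fun m _ ↦ ?_
  rw [add_right_comm _ (m : ℝ) 1, add_right_comm a (m : ℝ) 1,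
    Gamma_add_natCast_eq_mul_ascPochhammer hab,
    Gamma_add_natCast_eq_mul_ascPochhammer (by linarith), jacobiCoeff,
    show (x - 1) / 2 = -1 * ((1 - x) / 2) by ring, mul_pow, mul_div_mul_comm,
    show a + b + n + 1 = n + a + b + 1 by ring]
  ring

theorem exists_jacobiP_eq_mul_eval (ha : -1 < a) (hb : -1 < b) {n : ℕ} (hn : 1 ≤ n) :
    ∃ κ ≠ 0, ∀ x, jacobiP a b n x = κ * (jacobiNormalized a b n).eval ((1 - x) / 2) := by
  have hn' : (1 : ℝ) ≤ n := by exact_mod_cast hn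
  have hab : 0 < a + b + n + 1 := by linarith
  refine ⟨_, ?_, fun x ↦ by
    rw [jacobiP, sum_choose_mul_Gamma_div_eq_mul_eval ha hab, ← mul_assoc]⟩
  have hfactor : 0 < 2 * n + a + b + 1 := by linarith
  have hΓab' : 0 < Real.Gamma (n + a + b + 1) := Real.Gamma_pos_of_pos (by linarith)
  have hΓa : 0 < Real.Gamma (a + 1) := Real.Gamma_pos_of_pos (by linarith)
  have hΓan : 0 < Real.Gamma (a + n + 1) := Real.Gamma_pos_of_pos (by linarith)
  have hΓna : 0 < Real.Gamma (n + a + 1) := Real.Gamma_pos_of_pos (by linarith)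
  have hΓnb : 0 < Real.Gamma (n + b + 1) := Real.Gamma_pos_of_pos (by linarith)
  positivity

theorem jacobiP_div_jacobiP_one (ha : -1 < a) (hb : -1 < b) {n : ℕ} (hn : 1 ≤ n) (x : ℝ) :
    jacobiP a b n x / jacobiP a b n 1 = (jacobiNormalized a b n).eval ((1 - x) / 2) := by
  obtain ⟨κ, hκ, h⟩ := exists_jacobiP_eq_mul_eval ha hb hn
  rw [h, h, mul_div_mul_left _ _ hκ, sub_self, zero_div, eval_zero_jacobiNormalized, div_one]

theorem integral_sq_jacobiP_div_jacobiP_one_mul_le (ha : 1 ≤ a) (hb : -1 < b) (hba : b ≤ a)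
    {n : ℕ} (hn : 1 ≤ n) {t : ℝ} (ht : -1 < t) (hta : t ≤ a - 1) :
    ∫ x in (-1 : ℝ)..1,
        (jacobiP a b n x / jacobiP a b n 1) ^ 2 * (1 - x) ^ t * (1 + x) ^ (b + 1)
      ≤ 2 ^ (t + (b + 1) + 1) * ((1 / (t + 1) + 1)
        * (Real.Gamma (a + 1) ^ (4 / (2 * a + 1)) * (n : ℝ) ^ (-2 : ℝ)) ^ (t + 1)) := by
  simp only [jacobiP_div_jacobiP_one (show -1 < a by linarith) hb hn]
  rw [integral_comp_mul_one_sub_rpow_mul_one_add_rpow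
    fun y ↦ (jacobiNormalized a b n).eval y ^ 2]
  gcongr
  exact integral_sq_jacobiNormalized_mul_rpow_le ha hb hba hn ht hta

end JacobiBounds

theorem jacobi_sq_integral_bound_general {α β r s : ℝ} {n : ℕ} (hβ : 0 < β)
    (hβα : β ≤ α + r + 2) (hsα : 0 ≤ s + α) (hsr : s ≤ r) (hn : 1 ≤ n) :
    ∫ x in (-1 : ℝ)..1,
        (jacobiP (α + r + 1) (β - 1) n x / jacobiP (α + r + 1) (β - 1) n 1) ^ 2 *
          (1 - x) ^ (s + α) * (1 + x) ^ β
      ≤ 4 * 2 ^ (α + β + s) *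
        Real.Gamma (α + r + 2) ^ ((4 * α + 4 * s + 4) / (2 * α + 2 * r + 3)) *
        (n : ℝ) ^ (-2 * α - 2 * s - 2) := by
  have hn0 : (0 : ℝ) < n := by exact_mod_cast hn
  have hΓ : 0 < Real.Gamma (α + r + 2) := Real.Gamma_pos_of_pos (by linarith)
  have hconst : 1 / (s + α + 1) + 1 ≤ 2 := by
    linarith [div_le_one_of_le₀ (by linarith : 1 ≤ s + α + 1) (by linarith)]
  have bound := integral_sq_jacobiP_div_jacobiP_one_mul_le (a := α + r + 1) (b := β - 1)
    (by linarith) (by linarith) (by linarith) hn (t := s + α) (by linarith) (by linarith)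
  rw [sub_add_cancel, show α + r + 1 + 1 = α + r + 2 by ring] at bound
  calc _ ≤ _ := bound
    _ ≤ 2 ^ (s + α + β + 1) * (2 * (Real.Gamma (α + r + 2) ^ (4 / (2 * (α + r + 1) + 1))
          * (n : ℝ) ^ (-2 : ℝ)) ^ (s + α + 1)) := by gcongr
    _ = _ := by
      rw [mul_rpow (by positivity) (by positivity), ← rpow_mul hΓ.le, ← rpow_mul hn0.le,
        rpow_add_one two_ne_zero,
        show s + α + β = α + β + s by ring,
        show 4 / (2 * (α + r + 1) + 1) * (s + α + 1)
          = (4 * α + 4 * s + 4) / (2 * α + 2 * r + 3) by ring,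
        show -2 * (s + α + 1) = -2 * α - 2 * s - 2 by ring]
      ring

/-- Weighted `L²` bound for the normalized Jacobi polynomial `p_n^{(α+r+1,β−1)}`. -/
theorem jacobi_sq_integral_bound :
    ∃ c : ℝ, 0 < c ∧
      ∀ (α β r s : ℝ) (n : ℕ), 2 ≤ β → β ≤ α → -1 < s → s ≤ r →
        (2 * α + r + 1) ^ 2 ≤ (n : ℝ) →
        (∫ x in (-1 : ℝ)..1,
            (jacobiP (α + r + 1) (β - 1) n x / jacobiP (α + r + 1) (β - 1) n 1) ^ 2 *
              (1 - x) ^ (s + α) * (1 + x) ^ β) ≤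
          c * 2 ^ (α + β + s) * (α + r + 1) ^ ((1 : ℝ)/3) *
            Real.Gamma (α + r + 2) ^ ((4 * α + 4 * s + 4) / (2 * α + 2 * r + 3)) *
            (n : ℝ) ^ (-2 * α - 2 * s - 2) := by
  refine ⟨4, by norm_num, fun α β r s n hβ hβα hs hsr hn ↦
    (jacobi_sq_integral_bound_general (by linarith) (by linarith) (by linarith) hsr
      (by exact_mod_cast (by nlinarith : (1 : ℝ) ≤ n))).trans ?_⟩
  have hΓ : 0 < Real.Gamma (α + r + 2) := Real.Gamma_pos_of_pos (by linarith)
  gcongr ?_ * _ * _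
  exact le_mul_of_one_le_right (by positivity) (one_le_rpow (by linarith) (by norm_num))

end
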